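/- For every positive integer i it holds that 1 + 1/((φ+2)i²) < φi/⌊φi⌋ and φi/(⌊φi⌋+1) ≤ 1 − 1/(2φ²i²). Equivalently, the fractional part satisfies {φi} > 1/(√5 i) and 1 − {φi} ≥ 1/(φ²i) · ((⌊φi⌋+1)/(2i)) — in particular {φi} > 1/(√5 i). -/

import Mathlib

open Real

noncomputable def phi : ℝ := (1 + Real.sqrt 5) / 2

open scoped goldenRatio

/-!
With `ψ = -1/φ` the conjugate of `φ`, the norm form `(m - nφ)(m - nψ) = m² - mn - n²` of `ℤ[φ]`
takes a nonzero integer value when `n ≠ 0`, so `|m - nφ| |m - nψ| ≥ 1`. For `n = i` and `m = ⌊φi⌋`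
or `m = ⌊φi⌋ + 1`, the first factor is `{φi}` or `1 - {φi}`, and the second differs from `√5 i` by
just that amount since `φ - ψ = √5`; hence neither fractional distance can be small.
-/

section Floor

variable {K : Type*} [DivisionRing K] [LinearOrder K] [FloorRing K] {x : K}

lemma div_floor_eq_one_add (hx : (⌊x⌋ : K) ≠ 0) : x / ⌊x⌋ = 1 + Int.fract x / ⌊x⌋ := by
  rw [one_add_div hx, Int.floor_add_fract]

lemma div_floor_add_one_eq_one_sub (hx : (⌊x⌋ : K) + 1 ≠ 0) :
    x / (⌊x⌋ + 1) = 1 - (1 - Int.fract x) / (⌊x⌋ + 1) := by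
  rw [one_sub_div hx, ← Int.self_sub_floor]
  congr 1
  abel

end Floor

lemma goldenRatio_add_two : φ + 2 = √5 * φ := by
  rw [← goldenRatio_sub_goldenConj]
  linear_combination -goldenRatio_sq + goldenRatio_mul_goldenConj

lemma golden_norm_eq_mul (m n : ℝ) : m ^ 2 - m * n - n ^ 2 = (m - n * φ) * (m - n * ψ) := by
  linear_combination m * n * goldenRatio_add_goldenConj - n ^ 2 * goldenRatio_mul_goldenConj

lemma one_le_abs_sub_goldenRatio_mul_abs_sub_goldenConj (m : ℤ) {n : ℤ} (hn : n ≠ 0) :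
    1 ≤ |m - n * φ| * |m - n * ψ| := by
  have hφ : (m - n * φ : ℝ) ≠ 0 := ((goldenRatio_irrational.intCast_mul hn).intCast_sub m).ne_zero
  have hψ : (m - n * ψ : ℝ) ≠ 0 := ((goldenConj_irrational.intCast_mul hn).intCast_sub m).ne_zero
  have norm_eq : ((m ^ 2 - m * n - n ^ 2 : ℤ) : ℝ) = (m - n * φ) * (m - n * ψ) := by
    push_cast
    exact golden_norm_eq_mul m n
  have norm_ne_zero : m ^ 2 - m * n - n ^ 2 ≠ 0 := by
    rw [← Int.cast_ne_zero (α := ℝ), norm_eq]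
    exact mul_ne_zero hφ hψ
  rw [← abs_mul, ← norm_eq]
  exact_mod_cast Int.one_le_abs norm_ne_zero

section Fract

variable {i : ℕ}

lemma fract_goldenRatio_mul_lt_sqrt_five_mul (hi : 0 < i) : Int.fract (φ * i) < √5 * i := by
  have one_le_i : (1 : ℝ) ≤ i := mod_cast hi
  have one_lt_sqrt : 1 < √5 := Real.lt_sqrt_of_sq_lt (by norm_num)
  calc Int.fract (φ * i) < 1 := Int.fract_lt_one _
    _ ≤ √5 * i := one_le_mul_of_one_le_of_one_le one_lt_sqrt.le one_le_i

lemma one_le_fract_goldenRatio_mul_mul_sub (hi : 0 < i) :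
    1 ≤ Int.fract (φ * i) * (√5 * i - Int.fract (φ * i)) := by
  have floor_sub_goldenRatio : (⌊φ * i⌋ : ℝ) - i * φ = -Int.fract (φ * i) := by
    rw [← Int.self_sub_floor]
    ring
  have floor_sub_goldenConj : (⌊φ * i⌋ : ℝ) - i * ψ = √5 * i - Int.fract (φ * i) := by
    rw [← Int.self_sub_floor, ← goldenRatio_sub_goldenConj]
    ring
  have one_le_norm := one_le_abs_sub_goldenRatio_mul_abs_sub_goldenConj ⌊φ * i⌋
    (Int.natCast_ne_zero.mpr hi.ne')
  rwa [Int.cast_natCast, floor_sub_goldenRatio, floor_sub_goldenConj, abs_neg, Int.abs_fract,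
    abs_of_pos (sub_pos.mpr (fract_goldenRatio_mul_lt_sqrt_five_mul hi))] at one_le_norm

lemma one_le_one_sub_fract_goldenRatio_mul_mul_add (hi : 0 < i) :
    1 ≤ (1 - Int.fract (φ * i)) * (√5 * i + (1 - Int.fract (φ * i))) := by
  have floor_add_one_sub_goldenRatio :
      ((⌊φ * i⌋ + 1 : ℤ) : ℝ) - i * φ = 1 - Int.fract (φ * i) := by
    rw [← Int.self_sub_floor]
    push_cast
    ring
  have floor_add_one_sub_goldenConj :
      ((⌊φ * i⌋ + 1 : ℤ) : ℝ) - i * ψ = √5 * i + (1 - Int.fract (φ * i)) := by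
    rw [← Int.self_sub_floor, ← goldenRatio_sub_goldenConj]
    push_cast
    ring
  have one_sub_fract_pos : 0 < 1 - Int.fract (φ * i) := sub_pos.mpr (Int.fract_lt_one _)
  have one_le_norm := one_le_abs_sub_goldenRatio_mul_abs_sub_goldenConj (⌊φ * i⌋ + 1)
    (Int.natCast_ne_zero.mpr hi.ne')
  rwa [Int.cast_natCast, floor_add_one_sub_goldenRatio, floor_add_one_sub_goldenConj,
    abs_of_pos one_sub_fract_pos, abs_of_pos (by positivity)] at one_le_norm

lemma one_div_sqrt_five_mul_lt_fract_goldenRatio_mul (hi : 0 < i) :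
    1 / (√5 * i) < Int.fract (φ * i) := by
  have one_le := one_le_fract_goldenRatio_mul_mul_sub hi
  have fract_pos : 0 < Int.fract (φ * i) := by
    refine (Int.fract_nonneg _).lt_of_ne' fun fract_eq_zero ↦ ?_
    rw [fract_eq_zero, zero_mul] at one_le
    exact one_le.not_gt one_pos
  rw [div_lt_iff₀ (by positivity)]
  calc 1 ≤ Int.fract (φ * i) * (√5 * i - Int.fract (φ * i)) := one_le
    _ < Int.fract (φ * i) * (√5 * i) := by
      gcongr
      exact sub_lt_self _ fract_pos

lemma floor_goldenRatio_mul_pos (hi : 0 < i) : 0 < ⌊φ * i⌋ := by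
  have one_le_i : (1 : ℝ) ≤ i := mod_cast hi
  exact Int.floor_pos.mpr (one_le_mul_of_one_le_of_one_le one_lt_goldenRatio.le one_le_i)

lemma one_sub_fract_goldenRatio_mul_le (hi : 0 < i) :
    1 - Int.fract (φ * i) ≤ (2 - φ) * i := by
  have floor_lt : ⌊φ * i⌋ < 2 * i := by
    rw [Int.floor_lt]
    push_cast
    gcongr
    exact goldenRatio_lt_two
  have floor_add_one_le : (⌊φ * i⌋ : ℝ) + 1 ≤ 2 * i := mod_cast floor_lt
  rw [← Int.self_sub_floor]
  linarith

lemma floor_goldenRatio_mul_add_one_le (hi : 0 < i) :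
    (⌊φ * i⌋ : ℝ) + 1 ≤ 2 * φ ^ 2 * (i : ℝ) ^ 2 * (1 - Int.fract (φ * i)) := by
  have one_le_i : (1 : ℝ) ≤ i := mod_cast hi
  have one_le_mul := one_le_one_sub_fract_goldenRatio_mul_mul_add hi
  have le_mul := one_sub_fract_goldenRatio_mul_le hi
  have floor_add_one : (⌊φ * i⌋ : ℝ) + 1 = φ * i + (1 - Int.fract (φ * i)) := by
    rw [← Int.self_sub_floor]
    ring
  have nonneg : 0 ≤ 1 - Int.fract (φ * i) := sub_nonneg.mpr (Int.fract_lt_one _).le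
  rw [floor_add_one]
  set g := 1 - Int.fract (φ * i)
  -- Equality holds throughout at `i = 1`, where the cruder bound `g ≤ 1` would not suffice.
  have factor_le : φ * i * (√5 * i + g) + 1 ≤ 2 * φ ^ 2 * (i : ℝ) ^ 2 :=
    calc φ * i * (√5 * i + g) + 1
        ≤ φ * i * (√5 * i + (2 - φ) * i) + (i : ℝ) ^ 2 := by
          gcongr
          exact one_le_pow₀ one_le_i
      _ = 2 * φ ^ 2 * (i : ℝ) ^ 2 := by
          linear_combination
            -(i : ℝ) ^ 2 * goldenRatio_add_two - (i : ℝ) ^ 2 * 3 * goldenRatio_sq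
  calc φ * i + g
      ≤ φ * i * (g * (√5 * i + g)) + g := by
        have := le_mul_of_one_le_right (a := φ * i) (by positivity) one_le_mul
        gcongr
    _ = (φ * i * (√5 * i + g) + 1) * g := by ring
    _ ≤ 2 * φ ^ 2 * (i : ℝ) ^ 2 * g := by gcongr

lemma one_add_one_div_lt_goldenRatio_mul_div_floor (hi : 0 < i) :
    1 + 1 / ((φ + 2) * (i : ℝ) ^ 2) < φ * i / ⌊φ * i⌋ := by
  have floor_pos : (0 : ℝ) < ⌊φ * i⌋ := mod_cast floor_goldenRatio_mul_pos hi
  rw [div_floor_eq_one_add floor_pos.ne', goldenRatio_add_two]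
  gcongr 1 + ?_
  calc 1 / (√5 * φ * (i : ℝ) ^ 2) = 1 / (√5 * i) / (φ * i) := by field_simp
    _ < Int.fract (φ * i) / (φ * i) := by
      gcongr
      exact one_div_sqrt_five_mul_lt_fract_goldenRatio_mul hi
    _ ≤ Int.fract (φ * i) / ⌊φ * i⌋ :=
      div_le_div_of_nonneg_left (Int.fract_nonneg _) floor_pos (Int.floor_le _)

lemma goldenRatio_mul_div_floor_add_one_le (hi : 0 < i) :
    φ * i / (⌊φ * i⌋ + 1) ≤ 1 - 1 / (2 * φ ^ 2 * (i : ℝ) ^ 2) := by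
  have floor_pos : (0 : ℝ) < ⌊φ * i⌋ := mod_cast floor_goldenRatio_mul_pos hi
  rw [div_floor_add_one_eq_one_sub (by positivity)]
  gcongr 1 - ?_
  rw [div_le_div_iff₀ (by positivity) (by positivity), one_mul, mul_comm (1 - _)]
  exact floor_goldenRatio_mul_add_one_le hi

lemma floor_add_one_div_le_one_sub_fract_goldenRatio_mul (hi : 0 < i) :
    1 / (φ ^ 2 * i) * ((⌊φ * i⌋ + 1) / (2 * i)) ≤ 1 - Int.fract (φ * i) := by
  calc 1 / (φ ^ 2 * i) * ((⌊φ * i⌋ + 1) / (2 * i))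
      = (⌊φ * i⌋ + 1) / (2 * φ ^ 2 * (i : ℝ) ^ 2) := by field_simp
    _ ≤ 1 - Int.fract (φ * i) :=
      (div_le_iff₀' (by positivity)).mpr (floor_goldenRatio_mul_add_one_le hi)

end Fract

lemma phi_eq_goldenRatio : phi = φ := rfl

/-- Rational approximation properties of the golden ratio:
`1 + 1/((φ+2)i²) < φi/⌊φi⌋`, `φi/(⌊φi⌋+1) ≤ 1 − 1/(2φ²i²)`, and equivalently
`{φi} > 1/(√5·i)` and `1 − {φi} ≥ (1/(φ²i))·((⌊φi⌋+1)/(2i))`. -/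
theorem golden_rational_approx (i : ℕ) (hi : 0 < i) :
    1 + 1 / ((phi + 2) * (i : ℝ) ^ 2) < phi * i / (⌊phi * (i : ℝ)⌋ : ℝ) ∧
      phi * i / ((⌊phi * (i : ℝ)⌋ : ℝ) + 1) ≤ 1 - 1 / (2 * phi ^ 2 * (i : ℝ) ^ 2) ∧
      1 / (Real.sqrt 5 * i) < Int.fract (phi * (i : ℝ)) ∧
      1 / (phi ^ 2 * i) * (((⌊phi * (i : ℝ)⌋ : ℝ) + 1) / (2 * i))
        ≤ 1 - Int.fract (phi * (i : ℝ)) := by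
  rw [phi_eq_goldenRatio]
  exact ⟨one_add_one_div_lt_goldenRatio_mul_div_floor hi, goldenRatio_mul_div_floor_add_one_le hi,
    one_div_sqrt_five_mul_lt_fract_goldenRatio_mul hi,
    floor_add_one_div_le_one_sub_fract_goldenRatio_mul hi⟩
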